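/- Gårding-type bounds for the quadratic form of L: there exists a constant C = C(n) such that for every compactly supported smooth map u = (u_1,…,u_n): ℝⁿ → (n×n skew-symmetric real matrices)ⁿ, (1/2)·∫ Σ_{i,j} ‖∂_i u_j‖_F² ρ dy − C·∫ ‖u‖_F² ρ dy ≤ ∫ ⟨u, −Lu⟩_F ρ dy ≤ 2·∫ Σ_{i,j} ‖∂_i u_j‖_F² ρ dy + C·∫ ‖u‖_F² ρ dy, where ⟨u, −Lu⟩_F = Σ_j ⟨u_j, −(Lu)_j⟩_F and ‖u‖_F² = Σ_j ‖u_j‖_F². -/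

import Mathlib

open scoped BigOperators

noncomputable section

/-- Euclidean space `ℝⁿ`. -/
abbrev En (n : ℕ) := EuclideanSpace ℝ (Fin n)

/-- `n × n` real matrices, represented entrywise. -/
abbrev Mat (n : ℕ) := Fin n → Fin n → ℝ

variable {n : ℕ}

/-- Frobenius inner product `⟨A,B⟩_F = tr(AᵀB) = Σ_{μν} A_{μν} B_{μν}`. -/
def fipE (A B : Mat n) : ℝ := ∑ μ, ∑ ν, A μ ν * B μ ν

/-- Frobenius norm. -/
def fnormE (A : Mat n) : ℝ := Real.sqrt (fipE A A)

/-- Matrix commutator `[A, B] = AB − BA`, entrywise. -/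
def brkt (A B : Mat n) : Mat n := fun μ ν => ∑ k, (A μ k * B k ν - B μ k * A k ν)

/-- `A` is skew-symmetric. -/
def skewM (A : Mat n) : Prop := ∀ μ ν, A ν μ = -A μ ν

/-- Partial derivative `∂_i f` of a scalar function on `ℝⁿ`. -/
def pder (i : Fin n) (f : En n → ℝ) (y : En n) : ℝ :=
  fderiv ℝ f y (EuclideanSpace.single i 1)

/-- Euclidean Laplacian `Δf = Σ_i ∂_i ∂_i f` of a scalar function on `ℝⁿ`. -/
def lapS (f : En n → ℝ) (y : En n) : ℝ := ∑ i, pder i (fun z => pder i f z) y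

/-- Componentwise partial derivative `∂_i u` of a matrix-valued function on `ℝⁿ`. -/
def pderM (i : Fin n) (u : En n → Mat n) (y : En n) : Mat n :=
  fun μ ν => pder i (fun z => u z μ ν) y

/-- Componentwise Laplacian `Δu` of a matrix-valued function on `ℝⁿ`. -/
def lapM (u : En n → Mat n) (y : En n) : Mat n := fun μ ν => lapS (fun z => u z μ ν) y

/-- The constant `a = √(n−2)/(2√2)`. -/
def aC (n : ℕ) : ℝ := Real.sqrt ((n : ℝ) - 2) / (2 * Real.sqrt 2)

/-- The constant `b = (1/2)(6n − 12 − (n+2)√(2n−4))`. -/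
def bC (n : ℕ) : ℝ := (1 / 2) * (6 * (n : ℝ) - 12 - ((n : ℝ) + 2) * Real.sqrt (2 * (n : ℝ) - 4))

/-- `σ_i(y)`, the skew matrix with entries `(σ_i(y))^μ_ν = δ_{iν} y^μ − δ_{iμ} y^ν`. -/
def sigmaM (i : Fin n) (y : En n) : Mat n :=
  fun μ ν => (if i = ν then y μ else 0) - (if i = μ then y ν else 0)

/-- The soliton connection `W_i(y) = σ_i(y)/(a|y|² + b)`. -/
def Wc (i : Fin n) (y : En n) : Mat n :=
  fun μ ν => sigmaM i y μ ν / (aC n * ‖y‖ ^ 2 + bC n)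

/-- The curvature `F_{ij} = ∂_i W_j − ∂_j W_i + [W_i, W_j]` of the soliton connection `W`. -/
def Fc (i j : Fin n) (y : En n) : Mat n :=
  pderM i (Wc j) y - pderM j (Wc i) y + brkt (Wc i y) (Wc j y)

/-- The linearized operator `L` of the rescaled Yang–Mills de Turck flow at the soliton `W`:
`(Lu)_j = Δu_j − (1/2)Σ_i y_i ∂_i u_j − (1/2)u_j + 2Σ_i [W_i, ∂_i u_j]
  + Σ_i [W_i, [W_i, u_j]] + 2Σ_i [u_i, F_{ij}]`. -/
def Lop (u : En n → Fin n → Mat n) (y : En n) (j : Fin n) : Mat n :=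
  lapM (fun z => u z j) y
    - (1 / 2 : ℝ) • (∑ i, y i • pderM i (fun z => u z j) y)
    - (1 / 2 : ℝ) • u y j
    + (2 : ℝ) • ∑ i, brkt (Wc i y) (pderM i (fun z => u z j) y)
    + ∑ i, brkt (Wc i y) (brkt (Wc i y) (u y j))
    + (2 : ℝ) • ∑ i, brkt (u y i) (Fc i j y)

/-- Squared Frobenius norm of a tuple of matrices: `‖u‖_F² = Σ_j ‖u_j‖_F²`. -/
def tnormSq (v : Fin n → Mat n) : ℝ := ∑ j, fipE (v j) (v j)

/-- The Gaussian weight `ρ(y) = e^{−|y|²/4}`. -/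
def gauss (y : En n) : ℝ := Real.exp (-‖y‖ ^ 2 / 4)

end

/-!
Since `∇ρ = -(1/2) y ρ`, the operator `Δ - (1/2) y · ∇` is the drift Laplacian of `ρ`, so
integrating by parts turns `∫ ⟨u, -Lu⟩ ρ` into the Dirichlet energy `∫ Σ ‖∂_i u_j‖² ρ` minus terms
of order at most one in `u`. With `s = √(2n - 4)` one has `b = s (s - 2) (4 - s) / 4`, which is
positive exactly when `4 < n < 10`; as also `a > 0`, the connection `W` and its curvature are
bounded on `ℝⁿ`. The zeroth-order terms are then at most a multiple of `‖u‖²` by Cauchy–Schwarz and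
`‖[A, B]‖ ≤ 2 ‖A‖ ‖B‖`, and Young's inequality splits the first-order term
`2 ⟨u_j, [W_i, ∂_i u_j]⟩` into an arbitrarily small fraction of the energy density and a multiple
of `‖u‖²`.
-/

section FrobeniusGeometry

variable {n : ℕ}

/-- The Frobenius inner product as a continuous bilinear form. -/
noncomputable def fipL : Mat n →L[ℝ] Mat n →L[ℝ] ℝ :=
  LinearMap.toContinuousBilinearMap <| LinearMap.mk₂ ℝ fipE
    (fun A B C => by simp [fipE, add_mul, Finset.sum_add_distrib])
    (fun c A B => by simp [fipE, mul_assoc, Finset.mul_sum])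
    (fun A B C => by simp [fipE, mul_add, Finset.sum_add_distrib])
    (fun c A B => by simp [fipE, mul_left_comm, Finset.mul_sum])

lemma fipL_apply (A B : Mat n) : fipL A B = fipE A B := rfl

lemma fipE_self_nonneg (A : Mat n) : 0 ≤ fipE A A :=
  Finset.sum_nonneg fun _ _ => Finset.sum_nonneg fun _ _ => mul_self_nonneg _

lemma fnormE_nonneg (A : Mat n) : 0 ≤ fnormE A := Real.sqrt_nonneg _

lemma sq_fnormE (A : Mat n) : fnormE A ^ 2 = fipE A A := Real.sq_sqrt (fipE_self_nonneg A)

lemma abs_fipE_le (A B : Mat n) : |fipE A B| ≤ fnormE A * fnormE B := by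
  rw [fnormE, fnormE, ← Real.sqrt_mul (fipE_self_nonneg A)]
  apply Real.abs_le_sqrt
  simp only [fipE, ← Fintype.sum_prod_type', ← sq]
  exact Finset.sum_mul_sq_le_sq_mul_sq _ _ _

open scoped Matrix.Norms.Frobenius in
lemma fnormE_eq_norm (A : Mat n) : fnormE A = ‖Matrix.of A‖ := by
  simp [fnormE, fipE, Matrix.frobenius_norm_def, Real.sqrt_eq_rpow, ← sq]

open scoped Matrix.Norms.Frobenius in
lemma fnormE_add_le (A B : Mat n) : fnormE (A + B) ≤ fnormE A + fnormE B := by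
  simpa only [fnormE_eq_norm, Matrix.of_add_of] using norm_add_le (Matrix.of A) (Matrix.of B)

open scoped Matrix.Norms.Frobenius in
lemma fnormE_sub_le (A B : Mat n) : fnormE (A - B) ≤ fnormE A + fnormE B := by
  simpa only [fnormE_eq_norm, Matrix.of_sub_of] using norm_sub_le (Matrix.of A) (Matrix.of B)

lemma brkt_eq_commutator (A B : Mat n) :
    Matrix.of (brkt A B) = Matrix.of A * Matrix.of B - Matrix.of B * Matrix.of A := by
  ext μ ν
  simp [brkt, Matrix.mul_apply]

open scoped Matrix.Norms.Frobenius in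
lemma fnormE_brkt_le (A B : Mat n) : fnormE (brkt A B) ≤ 2 * (fnormE A * fnormE B) := by
  simp only [fnormE_eq_norm, brkt_eq_commutator]
  calc ‖Matrix.of A * Matrix.of B - Matrix.of B * Matrix.of A‖
      ≤ ‖Matrix.of A * Matrix.of B‖ + ‖Matrix.of B * Matrix.of A‖ := norm_sub_le _ _
    _ ≤ ‖Matrix.of A‖ * ‖Matrix.of B‖ + ‖Matrix.of B‖ * ‖Matrix.of A‖ :=
        add_le_add (norm_mul_le _ _) (norm_mul_le _ _)
    _ = 2 * (‖Matrix.of A‖ * ‖Matrix.of B‖) := by ring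

lemma fnormE_le_card_mul_norm (A : Mat n) : fnormE A ≤ n * ‖A‖ := by
  have entry_sq_le (μ ν : Fin n) : A μ ν * A μ ν ≤ ‖A‖ ^ 2 := by
    rw [← sq, ← sq_abs, ← Real.norm_eq_abs]
    gcongr
    exact (norm_le_pi_norm (A μ) ν).trans (norm_le_pi_norm A μ)
  refine Real.sqrt_le_iff.2 ⟨by positivity, ?_⟩
  calc fipE A A ≤ ∑ _μ : Fin n, ∑ _ν : Fin n, ‖A‖ ^ 2 :=
        Finset.sum_le_sum fun μ _ => Finset.sum_le_sum fun ν _ => entry_sq_le μ ν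
    _ = (n * ‖A‖) ^ 2 := by
        simp only [Finset.sum_const, Finset.card_univ, Fintype.card_fin, nsmul_eq_mul]
        ring

end FrobeniusGeometry

section LowerOrder

variable {n : ℕ}

lemma abs_fipE_brkt_le (A B C : Mat n) :
    |fipE A (brkt B C)| ≤ 2 * (fnormE A * (fnormE B * fnormE C)) :=
  calc |fipE A (brkt B C)| ≤ fnormE A * fnormE (brkt B C) := abs_fipE_le _ _
    _ ≤ fnormE A * (2 * (fnormE B * fnormE C)) :=
        mul_le_mul_of_nonneg_left (fnormE_brkt_le _ _) (fnormE_nonneg _)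
    _ = 2 * (fnormE A * (fnormE B * fnormE C)) := by ring

/-- The zeroth- and first-order part of the linearized operator at a point: `A` and `F` are the
values of the connection and of its curvature, `v` that of the variation, and `p i j` stands for
`∂_i u_j`. -/
noncomputable def lowerOrder (A : Fin n → Mat n) (F : Fin n → Fin n → Mat n) (v : Fin n → Mat n)
    (p : Fin n → Fin n → Mat n) (j : Fin n) : Mat n :=
  (2 : ℝ) • ∑ i, brkt (A i) (p i j) + ∑ i, brkt (A i) (brkt (A i) (v j))
    + (2 : ℝ) • ∑ i, brkt (v i) (F i j) - (1 / 2 : ℝ) • v j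

variable {A : Fin n → Mat n} {F : Fin n → Fin n → Mat n} {K M ε : ℝ}

lemma fipE_lowerOrder (v : Fin n → Mat n) (p : Fin n → Fin n → Mat n) (j : Fin n) :
    fipE (v j) (lowerOrder A F v p j) =
      ∑ i, (2 * fipE (v j) (brkt (A i) (p i j)) + fipE (v j) (brkt (A i) (brkt (A i) (v j)))
        + 2 * fipE (v j) (brkt (v i) (F i j))) - 1 / 2 * fipE (v j) (v j) := by
  simp only [← fipL_apply, lowerOrder, map_add, map_sub, map_smul, map_sum, smul_eq_mul,
    Finset.sum_add_distrib, Finset.mul_sum]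

lemma two_mul_abs_fipE_brkt_first_order_le (hε : 0 < ε) {A : Mat n} (hA : fnormE A ≤ K)
    (v p : Mat n) :
    2 * |fipE v (brkt A p)| ≤ ε * fipE p p + 4 * K ^ 2 / ε * fipE v v := by
  have young : 2 * (2 * (fnormE v * (K * fnormE p)))
      ≤ ε * fnormE p ^ 2 + 4 * K ^ 2 / ε * fnormE v ^ 2 := by
    have : ε * fnormE p ^ 2 + 4 * K ^ 2 / ε * fnormE v ^ 2
        - 2 * (2 * (fnormE v * (K * fnormE p))) = (ε * fnormE p - 2 * K * fnormE v) ^ 2 / ε := by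
      field_simp
      ring
    linarith [show 0 ≤ (ε * fnormE p - 2 * K * fnormE v) ^ 2 / ε by positivity]
  calc 2 * |fipE v (brkt A p)| ≤ 2 * (2 * (fnormE v * (fnormE A * fnormE p))) := by
        gcongr; exact abs_fipE_brkt_le _ _ _
    _ ≤ 2 * (2 * (fnormE v * (K * fnormE p))) := by
        gcongr <;> exact fnormE_nonneg _
    _ ≤ ε * fipE p p + 4 * K ^ 2 / ε * fipE v v := by simpa only [sq_fnormE] using young

lemma abs_fipE_brkt_brkt_le {A : Mat n} (hA : fnormE A ≤ K) (v : Mat n) :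
    |fipE v (brkt A (brkt A v))| ≤ 4 * K ^ 2 * fipE v v := by
  have hv := fnormE_nonneg v
  have hA₀ := fnormE_nonneg A
  calc |fipE v (brkt A (brkt A v))| ≤ 2 * (fnormE v * (fnormE A * fnormE (brkt A v))) :=
        abs_fipE_brkt_le _ _ _
    _ ≤ 2 * (fnormE v * (fnormE A * (2 * (fnormE A * fnormE v)))) := by
        gcongr; exact fnormE_brkt_le _ _
    _ = 4 * fnormE A ^ 2 * fnormE v ^ 2 := by ring
    _ ≤ 4 * K ^ 2 * fipE v v := by rw [← sq_fnormE]; gcongr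

lemma two_mul_abs_fipE_brkt_curvature_le {F : Mat n} (hF : fnormE F ≤ M) (v w : Mat n) :
    2 * |fipE v (brkt w F)| ≤ 2 * M * (fipE v v + fipE w w) := by
  have hv := fnormE_nonneg v
  have hw := fnormE_nonneg w
  have hM : 0 ≤ M := (fnormE_nonneg F).trans hF
  calc 2 * |fipE v (brkt w F)| ≤ 2 * (2 * (fnormE v * (fnormE w * fnormE F))) := by
        gcongr; exact abs_fipE_brkt_le _ _ _
    _ ≤ 2 * (2 * (fnormE v * (fnormE w * M))) := by gcongr
    _ = 2 * M * (2 * fnormE v * fnormE w) := by ring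
    _ ≤ 2 * M * (fnormE v ^ 2 + fnormE w ^ 2) := by gcongr; exact two_mul_le_add_sq _ _
    _ = 2 * M * (fipE v v + fipE w w) := by simp only [sq_fnormE]

/-- The zeroth-order constant in the Gårding inequality for a connection bounded by `K` whose
curvature is bounded by `M`, when an `ε`-fraction of the gradient is absorbed. -/
noncomputable def gardingConst (n : ℕ) (K M ε : ℝ) : ℝ :=
  n * (4 * K ^ 2 / ε + 4 * K ^ 2 + 4 * M) + 1 / 2

lemma abs_sum_fipE_lowerOrder_le (hε : 0 < ε) (hA : ∀ i, fnormE (A i) ≤ K)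
    (hF : ∀ i j, fnormE (F i j) ≤ M) (v : Fin n → Mat n) (p : Fin n → Fin n → Mat n) :
    |∑ j, fipE (v j) (lowerOrder A F v p j)|
      ≤ ε * ∑ i, ∑ j, fipE (p i j) (p i j) + gardingConst n K M ε * tnormSq v := by
  have summand_le (i j : Fin n) :
      |2 * fipE (v j) (brkt (A i) (p i j)) + fipE (v j) (brkt (A i) (brkt (A i) (v j)))
        + 2 * fipE (v j) (brkt (v i) (F i j))|
      ≤ ε * fipE (p i j) (p i j) + (4 * K ^ 2 / ε + 4 * K ^ 2 + 2 * M) * fipE (v j) (v j)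
        + 2 * M * fipE (v i) (v i) := by
    refine (abs_add_three _ _ _).trans ?_
    rw [abs_mul, abs_mul, abs_two]
    linarith [two_mul_abs_fipE_brkt_first_order_le hε (hA i) (v j) (p i j),
      abs_fipE_brkt_brkt_le (hA i) (v j), two_mul_abs_fipE_brkt_curvature_le (hF i j) (v j) (v i)]
  have component_le (j : Fin n) : |fipE (v j) (lowerOrder A F v p j)|
      ≤ ∑ i, (ε * fipE (p i j) (p i j)
          + (4 * K ^ 2 / ε + 4 * K ^ 2 + 2 * M) * fipE (v j) (v j) + 2 * M * fipE (v i) (v i))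
        + 1 / 2 * fipE (v j) (v j) := by
    rw [fipE_lowerOrder]
    refine (abs_sub _ _).trans (add_le_add ?_ ?_)
    · exact (Finset.abs_sum_le_sum_abs _ _).trans (Finset.sum_le_sum fun i _ => summand_le i j)
    · exact (abs_of_nonneg (mul_nonneg (by norm_num) (fipE_self_nonneg _))).le
  refine (Finset.abs_sum_le_sum_abs _ _).trans
    ((Finset.sum_le_sum fun j _ => component_le j).trans_eq ?_)
  simp only [Finset.sum_add_distrib, ← Finset.mul_sum, Finset.sum_const, Finset.card_univ,
    Fintype.card_fin, nsmul_eq_mul, gardingConst, tnormSq]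
  rw [Finset.sum_comm]
  ring

end LowerOrder

section GaussianIntegration

open MeasureTheory

variable {n : ℕ} {F G : Type*} [NormedAddCommGroup F] [NormedSpace ℝ F]
  [NormedAddCommGroup G] [NormedSpace ℝ G]

lemma gauss_pos (y : En n) : 0 < gauss y := Real.exp_pos _

lemma contDiff_gauss {m : WithTop ℕ∞} : ContDiff ℝ m (gauss : En n → ℝ) :=
  ((contDiff_norm_sq ℝ).neg.div_const 4).exp

lemma fderiv_gauss_apply (y v : En n) :
    fderiv ℝ gauss y v = -(inner ℝ y v / 2 * gauss y) := by
  have h : HasFDerivAt (gauss : En n → ℝ) _ y :=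
    ((hasFDerivAt_id y).norm_sq.neg.mul_const (4⁻¹ : ℝ)).exp
  rw [h.fderiv]
  simp only [gauss, smul_neg, neg_apply, smul_apply, Pi.neg_apply, ContinuousLinearMap.comp_apply,
    ContinuousLinearMap.id_apply, innerSL_apply_apply, smul_eq_mul, nsmul_eq_mul, div_eq_mul_inv,
    id]
  ring

variable (B : F →L[ℝ] G →L[ℝ] ℝ) {f : En n → F} {g : En n → G}

lemma integrable_bilinear_mul_gauss (hf : Continuous f) (hfc : HasCompactSupport f)
    (hg : Continuous g) : Integrable fun y => B (f y) (g y) * gauss y := by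
  have hcont : Continuous fun y => B (f y) (g y) * gauss y :=
    ((B.continuous.comp hf).clm_apply hg).mul (contDiff_gauss (m := 0)).continuous
  refine hcont.integrable_of_hasCompactSupport (hfc.mono fun y hy hfy => hy ?_)
  simp [hfy]

-- The adjoint of `∂_v` in `L²(ρ)` is `-∂_v + ⟨y, v⟩ / 2`, since `∂_v ρ = -(⟨y, v⟩ / 2) ρ`.
lemma integral_bilinear_fderiv_sub_mul_gauss (hf : ContDiff ℝ 1 f) (hfc : HasCompactSupport f)
    (hg : ContDiff ℝ 1 g) (v : En n) :
    ∫ y, B (f y) (fderiv ℝ g y v - (inner ℝ y v / 2) • g y) * gauss y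
      = -∫ y, B (fderiv ℝ f y v) (g y) * gauss y := by
  have hf' : Continuous fun y => fderiv ℝ f y v :=
    (hf.continuous_fderiv (by simp)).clm_apply continuous_const
  have hg' : Continuous fun y => fderiv ℝ g y v - (inner ℝ y v / 2) • g y :=
    ((hg.continuous_fderiv (by simp)).clm_apply continuous_const).sub
      (((continuous_id.inner continuous_const).div_const 2).smul hg.continuous)
  have hfd : Differentiable ℝ f := hf.differentiable (by simp)
  have hgd : Differentiable ℝ g := hg.differentiable (by simp)
  have hρd : Differentiable ℝ (gauss : En n → ℝ) :=
    (contDiff_gauss (m := 1)).differentiable (by simp)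
  have fderiv_weighted (y : En n) : fderiv ℝ (fun z => gauss z • g z) y v
      = gauss y • (fderiv ℝ g y v - (inner ℝ y v / 2) • g y) := by
    rw [fderiv_fun_smul (hρd y) (hgd y)]
    simp [fderiv_gauss_apply, smul_smul, mul_comm, sub_eq_add_neg]
  have parts := integral_bilinear_fderiv_right_eq_neg_left_of_integrable
    (μ := volume) (f := f) (g := fun z => gauss z • g z) (v := v) (B := B)
  simp only [fderiv_weighted, map_smul, smul_eq_mul, mul_comm (gauss _)] at parts
  exact parts (integrable_bilinear_mul_gauss B hf' (hfc.fderiv_apply ℝ v) hg.continuous)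
    (integrable_bilinear_mul_gauss B hf.continuous hfc hg')
    (integrable_bilinear_mul_gauss B hf.continuous hfc hg.continuous)
    (fun y _ => hfd y) (fun y _ => (hρd.smul hgd) y)

end GaussianIntegration

section QuadraticForm

open MeasureTheory

variable {n : ℕ} {f g : En n → Mat n}

lemma pderM_eq_fderiv (hf : Differentiable ℝ f) (i : Fin n) :
    pderM i f = fun y => fderiv ℝ f y (EuclideanSpace.single i 1) := by
  ext y μ ν
  have hrow : DifferentiableAt ℝ (fun z => f z μ) y := differentiableAt_pi.1 (hf y) μ
  rw [pderM, pder, fderiv_apply hrow, fderiv_apply (hf y)]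
  rfl

lemma contDiff_pderM {m k : WithTop ℕ∞} (hf : ContDiff ℝ m f) (hk : k + 1 ≤ m) (i : Fin n) :
    ContDiff ℝ k (pderM i f) := by
  rw [pderM_eq_fderiv (hf.differentiable (by rintro rfl; simp at hk))]
  exact (hf.fderiv_right hk).clm_apply contDiff_const

lemma hasCompactSupport_pderM (hf : Differentiable ℝ f) (hfc : HasCompactSupport f) (i : Fin n) :
    HasCompactSupport (pderM i f) := by
  rw [pderM_eq_fderiv hf]
  exact hfc.fderiv_apply ℝ _

lemma integrable_fipE_mul_gauss (hf : Continuous f) (hfc : HasCompactSupport f)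
    (hg : Continuous g) : Integrable fun y => fipE (f y) (g y) * gauss y :=
  integrable_bilinear_mul_gauss fipL hf hfc hg

lemma integral_fipE_pderM_sub_mul_gauss (hf : ContDiff ℝ 1 f) (hfc : HasCompactSupport f)
    (hg : ContDiff ℝ 1 g) (i : Fin n) :
    ∫ y, fipE (f y) (pderM i g y - (y i / 2) • g y) * gauss y
      = -∫ y, fipE (pderM i f y) (g y) * gauss y := by
  simpa [pderM_eq_fderiv (hf.differentiable one_ne_zero),
    pderM_eq_fderiv (hg.differentiable one_ne_zero), fipL_apply, EuclideanSpace.inner_single_right]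
    using integral_bilinear_fderiv_sub_mul_gauss fipL hf hfc hg (EuclideanSpace.single i 1)

/-- The Ornstein–Uhlenbeck operator `Δ - (1/2) Σ_i y_i ∂_i`, acting entrywise on matrix-valued
functions; it is the drift Laplacian of the weight `gauss`. -/
noncomputable def ornsteinUhlenbeck (f : En n → Mat n) (y : En n) : Mat n :=
  lapM f y - (1 / 2 : ℝ) • ∑ i, y i • pderM i f y

lemma ornsteinUhlenbeck_eq_sum (f : En n → Mat n) (y : En n) :
    ornsteinUhlenbeck f y = ∑ i, (pderM i (pderM i f) y - (y i / 2) • pderM i f y) := by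
  have hlap : lapM f y = ∑ i, pderM i (pderM i f) y := by
    ext μ ν
    simp [lapM, lapS, pderM, Finset.sum_apply]
  simp only [ornsteinUhlenbeck, hlap, Finset.sum_sub_distrib, Finset.smul_sum, smul_smul]
  congr! 3
  ring

lemma continuous_pderM_pderM_sub (hg : ContDiff ℝ 2 g) (i : Fin n) :
    Continuous fun y => pderM i (pderM i g) y - (y i / 2) • pderM i g y := by
  have hg₁ : ContDiff ℝ 1 (pderM i g) := contDiff_pderM hg (by norm_num) i
  have hg₂ : ContDiff ℝ 0 (pderM i (pderM i g)) := contDiff_pderM hg₁ (by norm_num) i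
  have := hg₁.continuous
  have := hg₂.continuous
  fun_prop

lemma continuous_ornsteinUhlenbeck (hg : ContDiff ℝ 2 g) : Continuous (ornsteinUhlenbeck g) := by
  rw [funext (ornsteinUhlenbeck_eq_sum g)]
  exact continuous_finsetSum _ fun i _ => continuous_pderM_pderM_sub hg i

lemma integral_fipE_ornsteinUhlenbeck (hf : ContDiff ℝ 1 f) (hfc : HasCompactSupport f)
    (hg : ContDiff ℝ 2 g) :
    ∫ y, fipE (f y) (ornsteinUhlenbeck g y) * gauss y
      = -∑ i, ∫ y, fipE (pderM i f y) (pderM i g y) * gauss y := by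
  simp only [ornsteinUhlenbeck_eq_sum, ← fipL_apply, map_sum, Finset.sum_mul]
  simp only [fipL_apply]
  rw [integral_finsetSum _ fun i _ =>
    integrable_fipE_mul_gauss hf.continuous hfc (continuous_pderM_pderM_sub hg i),
    ← Finset.sum_neg_distrib]
  exact Finset.sum_congr rfl fun i _ =>
    integral_fipE_pderM_sub_mul_gauss hf hfc (contDiff_pderM hg (by norm_num) i) i

/-- The squared gradient `Σ_{i,j} ‖∂_i u_j‖_F²`. -/
noncomputable def gradSq (u : En n → Fin n → Mat n) (y : En n) : ℝ :=
  ∑ i, ∑ j, fipE (pderM i (fun z => u z j) y) (pderM i (fun z => u z j) y)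

/-- The first- and zeroth-order terms of the linearization of the rescaled Yang–Mills–de Turck flow
at a connection `A` with curvature `F`. The two fields are independent arguments: only bounds on
`F`, not its expression through `A`, matter for the quadratic form. -/
noncomputable def lowerOrderAlong (A : Fin n → En n → Mat n) (F : Fin n → Fin n → En n → Mat n)
    (u : En n → Fin n → Mat n) (y : En n) : Fin n → Mat n :=
  lowerOrder (A · y) (F · · y) (u y) fun i j => pderM i (fun z => u z j) y

/-- The linearization of the rescaled Yang–Mills–de Turck flow at a connection `A` with
curvature `F`; `Lop` is its instance at the soliton. -/
noncomputable def linearizedOp (A : Fin n → En n → Mat n) (F : Fin n → Fin n → En n → Mat n)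
    (u : En n → Fin n → Mat n) (y : En n) (j : Fin n) : Mat n :=
  ornsteinUhlenbeck (fun z => u z j) y + lowerOrderAlong A F u y j

lemma Lop_eq_linearizedOp : Lop (n := n) = linearizedOp Wc Fc := by
  ext1 u; ext1 y; ext1 j
  simp only [Lop, linearizedOp, ornsteinUhlenbeck, lowerOrderAlong, lowerOrder]
  abel

lemma continuous_brkt (hf : Continuous f) (hg : Continuous g) :
    Continuous fun y => brkt (f y) (g y) := by
  unfold brkt
  fun_prop

variable {A : Fin n → En n → Mat n} {F : Fin n → Fin n → En n → Mat n}
  {u : En n → Fin n → Mat n} {K M ε : ℝ}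

lemma continuous_lowerOrderAlong (hA : ∀ i, Continuous (A i)) (hF : ∀ i j, Continuous (F i j))
    (hu : ContDiff ℝ 1 u) : Continuous (lowerOrderAlong A F u) := by
  refine continuous_pi fun j => ?_
  have hv (i : Fin n) : ContDiff ℝ 1 fun y => u y i := contDiff_pi.1 hu i
  have hp (i : Fin n) : Continuous (pderM i fun z => u z j) :=
    (contDiff_pderM (hv j) (zero_add _).le i).continuous
  have h₁ (i : Fin n) := continuous_brkt (hA i) (hp i)
  have h₂ (i : Fin n) := continuous_brkt (hA i) (continuous_brkt (hA i) (hv j).continuous)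
  have h₃ (i : Fin n) := continuous_brkt (hv i).continuous (hF i j)
  have := (hv j).continuous
  unfold lowerOrderAlong lowerOrder
  fun_prop

lemma hasCompactSupport_component (huc : HasCompactSupport u) (j : Fin n) :
    HasCompactSupport fun y => u y j :=
  huc.mono fun y hy huy => hy (by simp [huy])

lemma integrable_sum_fipE_mul_gauss {w : En n → Fin n → Mat n} (hu : Continuous u)
    (huc : HasCompactSupport u) (hw : Continuous w) :
    Integrable fun y => (∑ j, fipE (u y j) (w y j)) * gauss y := by
  simp only [Finset.sum_mul]
  exact integrable_finsetSum _ fun j _ => integrable_fipE_mul_gauss (by fun_prop)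
    (hasCompactSupport_component huc j) (by fun_prop)

lemma integrable_fipE_pderM_mul_gauss (hu : ContDiff ℝ 1 u) (huc : HasCompactSupport u)
    (i j : Fin n) : Integrable fun y =>
      fipE (pderM i (fun z => u z j) y) (pderM i (fun z => u z j) y) * gauss y := by
  have hv : ContDiff ℝ 1 fun y => u y j := contDiff_pi.1 hu j
  have hp := (contDiff_pderM hv (zero_add _).le i).continuous
  exact integrable_fipE_mul_gauss hp (hasCompactSupport_pderM (hv.differentiable one_ne_zero)
    (hasCompactSupport_component huc j) i) hp

lemma integrable_gradSq_mul_gauss (hu : ContDiff ℝ 1 u) (huc : HasCompactSupport u) :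
    Integrable fun y => gradSq u y * gauss y := by
  simp only [gradSq, Finset.sum_mul]
  exact integrable_finsetSum _ fun i _ => integrable_finsetSum _ fun j _ =>
    integrable_fipE_pderM_mul_gauss hu huc i j

lemma integral_gradSq_mul_gauss (hu : ContDiff ℝ 1 u) (huc : HasCompactSupport u) :
    ∫ y, gradSq u y * gauss y = ∑ j, ∑ i, ∫ y,
      fipE (pderM i (fun z => u z j) y) (pderM i (fun z => u z j) y) * gauss y := by
  have hint := integrable_fipE_pderM_mul_gauss hu huc
  simp only [gradSq, Finset.sum_mul]
  rw [Finset.sum_comm, integral_finsetSum _ fun i _ => integrable_finsetSum _ fun j _ => hint i j]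
  exact Finset.sum_congr rfl fun i _ => integral_finsetSum _ fun j _ => hint i j

lemma integral_gradSq_mul_gauss_nonneg (u : En n → Fin n → Mat n) :
    0 ≤ ∫ y, gradSq u y * gauss y :=
  integral_nonneg fun y => mul_nonneg (Finset.sum_nonneg fun _ _ => Finset.sum_nonneg
    fun _ _ => fipE_self_nonneg _) (gauss_pos y).le

lemma integral_sum_fipE_ornsteinUhlenbeck (hu : ContDiff ℝ 2 u) (huc : HasCompactSupport u) :
    ∫ y, (∑ j, fipE (u y j) (ornsteinUhlenbeck (fun z => u z j) y)) * gauss y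
      = -∫ y, gradSq u y * gauss y := by
  have hv (j : Fin n) : ContDiff ℝ 2 fun y => u y j := contDiff_pi.1 hu j
  have hvc := hasCompactSupport_component huc
  rw [integral_gradSq_mul_gauss (hu.of_le one_le_two) huc, ← Finset.sum_neg_distrib]
  simp only [Finset.sum_mul]
  rw [integral_finsetSum _ fun j _ => integrable_fipE_mul_gauss (hv j).continuous (hvc j)
    (continuous_ornsteinUhlenbeck (hv j))]
  exact Finset.sum_congr rfl fun j _ =>
    integral_fipE_ornsteinUhlenbeck ((hv j).of_le one_le_two) (hvc j) (hv j)

lemma integral_sum_fipE_neg_linearizedOp (hA : ∀ i, Continuous (A i))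
    (hF : ∀ i j, Continuous (F i j)) (hu : ContDiff ℝ 2 u) (huc : HasCompactSupport u) :
    ∫ y, (∑ j, fipE (u y j) (-linearizedOp A F u y j)) * gauss y
      = (∫ y, gradSq u y * gauss y)
        - ∫ y, (∑ j, fipE (u y j) (lowerOrderAlong A F u y j)) * gauss y := by
  have split (y : En n) : (∑ j, fipE (u y j) (-linearizedOp A F u y j)) * gauss y
      = -((∑ j, fipE (u y j) (ornsteinUhlenbeck (fun z => u z j) y)) * gauss y
        + (∑ j, fipE (u y j) (lowerOrderAlong A F u y j)) * gauss y) := by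
    simp only [linearizedOp, ← fipL_apply, map_neg, map_add, Finset.sum_neg_distrib,
      Finset.sum_add_distrib]
    ring
  have hOU := integrable_sum_fipE_mul_gauss hu.continuous huc
    (continuous_pi fun j => continuous_ornsteinUhlenbeck (contDiff_pi.1 hu j))
  have hlow := integrable_sum_fipE_mul_gauss hu.continuous huc
    (continuous_lowerOrderAlong hA hF (hu.of_le one_le_two))
  simp only [split]
  rw [integral_neg, integral_add hOU hlow, integral_sum_fipE_ornsteinUhlenbeck hu huc]
  ring

lemma abs_integral_sum_fipE_lowerOrderAlong_le (hε : 0 < ε) (hA : ∀ i y, fnormE (A i y) ≤ K)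
    (hF : ∀ i j y, fnormE (F i j y) ≤ M) (hu : ContDiff ℝ 1 u) (huc : HasCompactSupport u) :
    |∫ y, (∑ j, fipE (u y j) (lowerOrderAlong A F u y j)) * gauss y|
      ≤ ε * (∫ y, gradSq u y * gauss y)
        + gardingConst n K M ε * ∫ y, tnormSq (u y) * gauss y := by
  have hG := (integrable_gradSq_mul_gauss hu huc).const_mul ε
  have hT : Integrable fun y => gardingConst n K M ε * (tnormSq (u y) * gauss y) :=
    (integrable_sum_fipE_mul_gauss hu.continuous huc hu.continuous).const_mul _
  rw [← integral_const_mul, ← integral_const_mul, ← integral_add hG hT]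
  refine abs_integral_le_integral_abs.trans (integral_mono_of_nonneg
    (ae_of_all _ fun y => abs_nonneg _) (hG.add hT) (ae_of_all _ fun y => ?_))
  calc |(∑ j, fipE (u y j) (lowerOrderAlong A F u y j)) * gauss y|
      = |∑ j, fipE (u y j) (lowerOrderAlong A F u y j)| * gauss y := by
        rw [abs_mul, abs_of_pos (gauss_pos y)]
    _ ≤ (ε * gradSq u y + gardingConst n K M ε * tnormSq (u y)) * gauss y :=
        mul_le_mul_of_nonneg_right (abs_sum_fipE_lowerOrder_le hε (hA · y) (hF · · y) _ _)
          (gauss_pos y).le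
    _ = ε * (gradSq u y * gauss y) + gardingConst n K M ε * (tnormSq (u y) * gauss y) := by ring

theorem abs_integral_neg_linearizedOp_sub_gradSq_le (hε : 0 < ε) (hA : ∀ i, Continuous (A i))
    (hF : ∀ i j, Continuous (F i j)) (hAK : ∀ i y, fnormE (A i y) ≤ K)
    (hFM : ∀ i j y, fnormE (F i j y) ≤ M) (hu : ContDiff ℝ 2 u) (huc : HasCompactSupport u) :
    |(∫ y, (∑ j, fipE (u y j) (-linearizedOp A F u y j)) * gauss y) - ∫ y, gradSq u y * gauss y|
      ≤ ε * (∫ y, gradSq u y * gauss y)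
        + gardingConst n K M ε * ∫ y, tnormSq (u y) * gauss y := by
  rw [integral_sum_fipE_neg_linearizedOp hA hF hu huc, sub_sub_cancel_left, abs_neg]
  exact abs_integral_sum_fipE_lowerOrderAlong_le hε hAK hFM (hu.of_le one_le_two) huc

end QuadraticForm

section InverseQuadraticField

lemma quadratic_pos {a b : ℝ} (ha : 0 ≤ a) (hb : 0 < b) (s : ℝ) : 0 < a * s ^ 2 + b := by
  positivity

variable {E F : Type*} [NormedAddCommGroup E] [InnerProductSpace ℝ E]
  [NormedAddCommGroup F] [NormedSpace ℝ F] {a b : ℝ}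

lemma contDiff_inv_quadratic_smul (ha : 0 ≤ a) (hb : 0 < b) (T : E →L[ℝ] F)
    {m : WithTop ℕ∞} : ContDiff ℝ m fun y => (a * ‖y‖ ^ 2 + b)⁻¹ • T y :=
  (((contDiff_const.mul (contDiff_norm_sq ℝ)).add contDiff_const).inv
    fun y => (quadratic_pos ha hb ‖y‖).ne').smul T.contDiff

lemma norm_inv_quadratic_smul_le (ha : 0 < a) (hb : 0 < b) (T : E →L[ℝ] F) (y : E) :
    ‖(a * ‖y‖ ^ 2 + b)⁻¹ • T y‖ ≤ ‖T‖ / (2 * (√a * √b)) := by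
  have hq := quadratic_pos ha.le hb ‖y‖
  have amgm : ‖y‖ * (2 * (√a * √b)) ≤ a * ‖y‖ ^ 2 + b := by
    have := two_mul_le_add_sq (√a * ‖y‖) √b
    rw [mul_pow, Real.sq_sqrt ha.le, Real.sq_sqrt hb.le] at this
    linarith
  rw [norm_smul, norm_inv, Real.norm_of_nonneg hq.le, inv_mul_eq_div,
    div_le_div_iff₀ hq (by positivity)]
  calc ‖T y‖ * (2 * (√a * √b)) ≤ ‖T‖ * ‖y‖ * (2 * (√a * √b)) := by gcongr; exact T.le_opNorm y
    _ = ‖T‖ * (‖y‖ * (2 * (√a * √b))) := by ring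
    _ ≤ ‖T‖ * (a * ‖y‖ ^ 2 + b) := by gcongr

lemma fderiv_inv_quadratic_smul_apply (ha : 0 ≤ a) (hb : 0 < b) (T : E →L[ℝ] F) (y v : E) :
    fderiv ℝ (fun z => (a * ‖z‖ ^ 2 + b)⁻¹ • T z) y v
      = (a * ‖y‖ ^ 2 + b)⁻¹ • T v
        - (2 * a * inner ℝ y v / (a * ‖y‖ ^ 2 + b) ^ 2) • T y := by
  have hq : HasFDerivAt (fun z : E => a * ‖z‖ ^ 2 + b) (a • (2 • innerSL ℝ y)) y := by
    simpa using (((hasFDerivAt_id y).norm_sq.const_mul a).add_const b)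
  have hinv := (hasDerivAt_inv (quadratic_pos ha hb ‖y‖).ne').comp_hasFDerivAt y hq
  have h : HasFDerivAt (fun z => (a * ‖z‖ ^ 2 + b)⁻¹ • T z) _ y := hinv.smul T.hasFDerivAt
  rw [h.fderiv]
  simp only [Function.comp_apply, add_apply, smul_apply, ContinuousLinearMap.smulRight_apply,
    coe_innerSL_apply, nsmul_eq_mul, Nat.cast_ofNat, smul_eq_mul, neg_mul, div_eq_mul_inv,
    sub_eq_add_neg, ← neg_smul, add_right_inj]
  congr 1
  ring

lemma norm_fderiv_inv_quadratic_smul_apply_le (ha : 0 ≤ a) (hb : 0 < b) (T : E →L[ℝ] F)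
    (y v : E) :
    ‖fderiv ℝ (fun z => (a * ‖z‖ ^ 2 + b)⁻¹ • T z) y v‖ ≤ 3 * ‖T‖ * ‖v‖ / b := by
  have hq := quadratic_pos ha hb ‖y‖
  set q := a * ‖y‖ ^ 2 + b
  have hbq : b ≤ q := le_add_of_nonneg_left (by positivity)
  have first_le : ‖q⁻¹ • T v‖ ≤ ‖T‖ * ‖v‖ / b := by
    rw [norm_smul, norm_inv, Real.norm_of_nonneg hq.le, inv_mul_eq_div]
    gcongr
    exact T.le_opNorm v
  have second_le : ‖(2 * a * inner ℝ y v / q ^ 2) • T y‖ ≤ 2 * (‖T‖ * ‖v‖ / b) :=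
    calc ‖(2 * a * inner ℝ y v / q ^ 2) • T y‖ = 2 * a * |inner ℝ y v| / q ^ 2 * ‖T y‖ := by
          rw [norm_smul, Real.norm_eq_abs, abs_div, abs_mul, abs_of_nonneg (by positivity),
            abs_of_nonneg (sq_nonneg q)]
      _ ≤ 2 * a * (‖y‖ * ‖v‖) / q ^ 2 * (‖T‖ * ‖y‖) := by
          gcongr
          · exact abs_real_inner_le_norm y v
          · exact T.le_opNorm y
      _ = 2 * (‖T‖ * ‖v‖) * (a * ‖y‖ ^ 2) / q ^ 2 := by ring
      _ ≤ 2 * (‖T‖ * ‖v‖) * q / q ^ 2 := by gcongr; exact le_add_of_nonneg_right hb.le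
      _ = 2 * (‖T‖ * ‖v‖ / q) := by field_simp
      _ ≤ 2 * (‖T‖ * ‖v‖ / b) := by gcongr
  rw [fderiv_inv_quadratic_smul_apply ha hb]
  calc _ ≤ ‖T‖ * ‖v‖ / b + 2 * (‖T‖ * ‖v‖ / b) :=
        (norm_sub_le _ _).trans (add_le_add first_le second_le)
    _ = 3 * ‖T‖ * ‖v‖ / b := by ring

end InverseQuadraticField

section Soliton

variable {n : ℕ}

lemma aC_pos (hn : 2 < n) : 0 < aC n := by
  have : (2 : ℝ) < n := by exact_mod_cast hn
  have : 0 < √((n : ℝ) - 2) := Real.sqrt_pos.2 (by linarith)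
  unfold aC
  positivity

lemma bC_eq (hn : 2 ≤ n) :
    bC n = √(2 * n - 4) * (√(2 * n - 4) - 2) * (4 - √(2 * n - 4)) / 4 := by
  have hn' : (2 : ℝ) ≤ n := by exact_mod_cast hn
  have hs : √(2 * (n : ℝ) - 4) ^ 2 = 2 * n - 4 := Real.sq_sqrt (by linarith)
  unfold bC
  linear_combination (√(2 * (n : ℝ) - 4) / 4 - 3 / 2) * hs

lemma bC_pos (hn : 4 < n) (hn' : n < 10) : 0 < bC n := by
  have hlo : (4 : ℝ) < n := by exact_mod_cast hn
  have hhi : (n : ℝ) < 10 := by exact_mod_cast hn'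
  have h₂ : 2 < √(2 * (n : ℝ) - 4) := Real.lt_sqrt_of_sq_lt (by linarith)
  have h₄ : √(2 * (n : ℝ) - 4) < 4 := (Real.sqrt_lt' (by norm_num)).2 (by linarith)
  rw [bC_eq (by lia)]
  have := sub_pos.2 h₂
  have := sub_pos.2 h₄
  positivity

lemma norm_sigmaM_le (i : Fin n) (y : En n) : ‖sigmaM i y‖ ≤ ‖y‖ := by
  have coord_le (k : Fin n) : |y k| ≤ ‖y‖ := PiLp.norm_apply_le y k
  refine (pi_norm_le_iff_of_nonneg (norm_nonneg y)).2 fun μ =>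
    (pi_norm_le_iff_of_nonneg (norm_nonneg y)).2 fun ν => ?_
  unfold sigmaM
  split_ifs with hν hμ hμ
  · simp [← hν, ← hμ]
  all_goals simp [coord_le]

/-- The map `y ↦ σ_i(y)` as a continuous linear map. -/
noncomputable def sigmaL (i : Fin n) : En n →L[ℝ] Mat n :=
  LinearMap.mkContinuous
    { toFun := sigmaM i
      map_add' := fun y z => by ext μ ν; simp only [sigmaM, PiLp.add_apply, Pi.add_apply]; grind
      map_smul' := fun c y => by ext μ ν; simp [sigmaM, mul_sub] }
    1 fun y => by simpa using norm_sigmaM_le i y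

lemma norm_sigmaL_le (i : Fin n) : ‖sigmaL i‖ ≤ 1 :=
  LinearMap.mkContinuous_norm_le _ zero_le_one _

lemma Wc_eq_smul_sigmaL (i : Fin n) :
    Wc i = fun y => (aC n * ‖y‖ ^ 2 + bC n)⁻¹ • sigmaL i y := by
  ext y μ ν
  exact div_eq_inv_mul _ _

lemma contDiff_Wc (ha : 0 ≤ aC n) (hb : 0 < bC n) {m : WithTop ℕ∞} (i : Fin n) :
    ContDiff ℝ m (Wc i) := by
  rw [Wc_eq_smul_sigmaL]
  exact contDiff_inv_quadratic_smul ha hb _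

lemma norm_Wc_le (ha : 0 < aC n) (hb : 0 < bC n) (i : Fin n) (y : En n) :
    ‖Wc i y‖ ≤ 1 / (2 * (√(aC n) * √(bC n))) := by
  rw [Wc_eq_smul_sigmaL]
  exact (norm_inv_quadratic_smul_le ha hb _ y).trans (by gcongr; exact norm_sigmaL_le i)

lemma norm_pderM_Wc_le (ha : 0 ≤ aC n) (hb : 0 < bC n) (i j : Fin n) (y : En n) :
    ‖pderM i (Wc j) y‖ ≤ 3 / bC n := by
  rw [pderM_eq_fderiv ((contDiff_Wc (m := 1) ha hb j).differentiable one_ne_zero),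
    Wc_eq_smul_sigmaL]
  calc _ ≤ 3 * ‖sigmaL j‖ * ‖EuclideanSpace.single i (1 : ℝ)‖ / bC n :=
        norm_fderiv_inv_quadratic_smul_apply_le ha hb _ _ _
    _ ≤ 3 * 1 * 1 / bC n := by gcongr; exacts [norm_sigmaL_le j, by simp]
    _ = 3 / bC n := by ring

lemma continuous_Fc (ha : 0 ≤ aC n) (hb : 0 < bC n) (i j : Fin n) : Continuous (Fc i j) := by
  have hW (k : Fin n) := (contDiff_Wc (m := 1) ha hb k).continuous
  have hp (k l : Fin n) :=
    (contDiff_pderM (contDiff_Wc (m := 1) ha hb l) (zero_add _).le k).continuous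
  exact ((hp i j).sub (hp j i)).add (continuous_brkt (hW i) (hW j))

lemma exists_fnormE_Wc_le (ha : 0 < aC n) (hb : 0 < bC n) :
    ∃ K, ∀ i (y : En n), fnormE (Wc i y) ≤ K :=
  ⟨n * (1 / (2 * (√(aC n) * √(bC n)))), fun i y =>
    (fnormE_le_card_mul_norm _).trans (by gcongr; exact norm_Wc_le ha hb i y)⟩

lemma exists_fnormE_Fc_le (ha : 0 < aC n) (hb : 0 < bC n) :
    ∃ M, ∀ i j (y : En n), fnormE (Fc i j y) ≤ M := by
  obtain ⟨K, hK⟩ := exists_fnormE_Wc_le ha hb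
  have hp (i j : Fin n) (y : En n) : fnormE (pderM i (Wc j) y) ≤ n * (3 / bC n) :=
    (fnormE_le_card_mul_norm _).trans (by gcongr; exact norm_pderM_Wc_le ha.le hb i j y)
  refine ⟨n * (3 / bC n) + n * (3 / bC n) + 2 * (K * K), fun i j y => ?_⟩
  calc fnormE (Fc i j y)
      ≤ fnormE (pderM i (Wc j) y - pderM j (Wc i) y) + fnormE (brkt (Wc i y) (Wc j y)) :=
        fnormE_add_le _ _
    _ ≤ fnormE (pderM i (Wc j) y) + fnormE (pderM j (Wc i) y)
          + 2 * (fnormE (Wc i y) * fnormE (Wc j y)) :=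
        add_le_add (fnormE_sub_le _ _) (fnormE_brkt_le _ _)
    _ ≤ n * (3 / bC n) + n * (3 / bC n) + 2 * (K * K) := by
        gcongr
        exacts [hp i j y, hp j i y, fnormE_nonneg _, (fnormE_nonneg _).trans (hK i y), hK i y,
          hK j y]

end Soliton

open MeasureTheory in
theorem garding_bounds_general (n : ℕ) (hn : 5 ≤ n) (hn' : n ≤ 9) {ε : ℝ} (hε : 0 < ε) :
    ∃ C : ℝ, ∀ u : En n → Fin n → Mat n, ContDiff ℝ 2 u → HasCompactSupport u →
      (1 - ε) * (∫ y : En n,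
            (∑ i, ∑ j, fipE (pderM i (fun z => u z j) y) (pderM i (fun z => u z j) y)) * gauss y)
          - C * (∫ y : En n, tnormSq (u y) * gauss y)
        ≤ (∫ y : En n, (∑ j, fipE (u y j) (-(Lop u y j))) * gauss y) ∧
      (∫ y : En n, (∑ j, fipE (u y j) (-(Lop u y j))) * gauss y)
        ≤ (1 + ε) * (∫ y : En n,
            (∑ i, ∑ j, fipE (pderM i (fun z => u z j) y) (pderM i (fun z => u z j) y)) * gauss y)
          + C * (∫ y : En n, tnormSq (u y) * gauss y) := by
  have ha : 0 < aC n := aC_pos (by lia)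
  have hb : 0 < bC n := bC_pos (by lia) (by lia)
  obtain ⟨K, hK⟩ := exists_fnormE_Wc_le ha hb
  obtain ⟨M, hM⟩ := exists_fnormE_Fc_le ha hb
  refine ⟨gardingConst n K M ε, fun u hu huc => ?_⟩
  have bound := abs_le.1 <| abs_integral_neg_linearizedOp_sub_gradSq_le hε
    (fun i => (contDiff_Wc (m := 0) ha.le hb i).continuous) (continuous_Fc ha.le hb) hK hM hu huc
  rw [← Lop_eq_linearizedOp] at bound
  unfold gradSq at bound
  constructor <;> linarith

open MeasureTheory in
/-- Gårding-type bounds for the quadratic form of `L`: there is `C = C(n)` such that for every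
compactly supported smooth skew-valued `u`,
`(1/2)∫ Σ_{i,j}‖∂_i u_j‖_F² ρ − C∫‖u‖_F² ρ ≤ ∫⟨u, −Lu⟩_F ρ ≤ 2∫ Σ_{i,j}‖∂_i u_j‖_F² ρ + C∫‖u‖_F² ρ`. -/
theorem garding_bounds (n : ℕ) (hn : 5 ≤ n) (hn' : n ≤ 9) :
    ∃ C : ℝ, ∀ u : En n → Fin n → Mat n,
      ContDiff ℝ (⊤ : ℕ∞) u → HasCompactSupport u → (∀ y j, skewM (u y j)) →
      (1 / 2) * (∫ y : En n,
            (∑ i, ∑ j, fipE (pderM i (fun z => u z j) y) (pderM i (fun z => u z j) y)) * gauss y)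
          - C * (∫ y : En n, tnormSq (u y) * gauss y)
        ≤ (∫ y : En n, (∑ j, fipE (u y j) (-(Lop u y j))) * gauss y) ∧
      (∫ y : En n, (∑ j, fipE (u y j) (-(Lop u y j))) * gauss y)
        ≤ 2 * (∫ y : En n,
            (∑ i, ∑ j, fipE (pderM i (fun z => u z j) y) (pderM i (fun z => u z j) y)) * gauss y)
          + C * (∫ y : En n, tnormSq (u y) * gauss y) := by
  obtain ⟨C, hC⟩ := garding_bounds_general n hn hn' one_half_pos
  refine ⟨C, fun u hu huc _ => ?_⟩
  have bounds := hC u (contDiff_infty.1 hu 2) huc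
  have energy_nonneg := integral_gradSq_mul_gauss_nonneg u
  unfold gradSq at energy_nonneg
  constructor <;> linarith
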